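/- Let 0 < r < ρ < R. There exists a constant C > 0, depending only on r, ρ and R, such that for every smooth subharmonic function ψ̃ on an open neighborhood of the closed disk of radius R centered at 0 in ℂ with ψ̃ ≤ 1 on the closed disk and ψ̃(0) ≥ 0, and every z ∈ ℂ with |z| < r, one has | (1/2π) ∫_{B_R(0) \ B_ρ(0)} log( |Rz − Rζ| / |R² − z·conj(ζ)| ) · Δψ̃(ζ) dA(ζ) | ≤ C. -/

import Mathlib

open MeasureTheory

/-- The Laplacian `Δf = ∂²f/∂x² + ∂²f/∂y²` of a function `f : ℂ → ℝ`, expressed via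
iterated directional (Fréchet) derivatives in the directions `1` and `i`. -/
noncomputable def laplacian (f : ℂ → ℝ) (z : ℂ) : ℝ :=
  fderiv ℝ (fun w => fderiv ℝ f w 1) z 1 +
    fderiv ℝ (fun w => fderiv ℝ f w Complex.I) z Complex.I

/-!
For `‖z‖ < r` the Green kernel `log (‖Rz - Rζ‖ / ‖R² - z ζ̄‖)` vanishes on `‖ζ‖ = R` and has no
singularity on `ρ ≤ ‖ζ‖`, so there it is bounded by a multiple of `log (R / ‖ζ‖)`. It remains to
bound `∫ log (R / ‖ζ‖) Δψ` over the annulus. If `M t` is the average of `ψ` over the circle of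
radius `t` and `N t = t M' t`, then `(r ∂_r)² + ∂_θ² = r² Δ` implies that `N' t` is `t` times the
circle average of `Δψ`, so integration by parts evaluates this integral as
`2π (M R - M ρ - log (R / ρ) N ρ)`. Subharmonicity makes `M` and `N` monotone, which gives
`ψ 0 ≤ M ρ` and `0 ≤ N ρ`, while `M R` is at most the supremum of `ψ` on `‖ζ‖ = R`.
-/

section

open Complex Metric Real Set Topology
open scoped Laplacian

section CircleAverage

variable {E : Type*} [NormedAddCommGroup E] [NormedSpace ℝ E]
  {f : ℂ → E} {c z : ℂ} {ρ R : ℝ} {U : Set ℂ}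

/-- The derivative `r ∂f/∂r` in polar coordinates around `c`. The factor `r` makes it smooth at the
center. -/
noncomputable def radialDeriv (c : ℂ) (f : ℂ → E) (z : ℂ) : E :=
  fderiv ℝ f z (z - c)

/-- The derivative `∂f/∂θ` in polar coordinates around `c`. -/
noncomputable def angularDeriv (c : ℂ) (f : ℂ → E) (z : ℂ) : E :=
  fderiv ℝ f z (I * (z - c))

lemma contDiffOn_radialDeriv {n : WithTop ℕ∞} (hU : IsOpen U) (hf : ContDiffOn ℝ (n + 1) f U) :
    ContDiffOn ℝ n (radialDeriv c f) U :=
  (hf.fderiv_of_isOpen hU le_rfl).clm_apply (by fun_prop)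

lemma contDiffOn_angularDeriv {n : WithTop ℕ∞} (hU : IsOpen U) (hf : ContDiffOn ℝ (n + 1) f U) :
    ContDiffOn ℝ n (angularDeriv c f) U :=
  (hf.fderiv_of_isOpen hU le_rfl).clm_apply (by fun_prop)

lemma hasDerivAt_circleMap_radius (c : ℂ) (R θ : ℝ) :
    HasDerivAt (fun t : ℝ => circleMap c t θ) (circleMap 0 1 θ) R := by
  simpa [circleMap] using ((hasDerivAt_id R).ofReal_comp.mul_const (exp (θ * I))).const_add c

lemma circleMap_mem_cthickening_sphere {t δ : ℝ} (c : ℂ) (ht : t ∈ closedBall R δ) (θ : ℝ) :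
    circleMap c t θ ∈ cthickening δ (sphere c |R|) := by
  refine mem_cthickening_of_dist_le _ _ _ _ (circleMap_mem_sphere' c R θ) ?_
  have : circleMap c t θ - circleMap c R θ = (t - R : ℝ) * exp (θ * I) := by
    simp only [circleMap, ofReal_sub]
    ring
  simpa [dist_eq_norm, this, ← ofReal_sub] using ht

lemma hasDerivAt_circleAverage (hU : IsOpen U) (hf : ContDiffOn ℝ 1 f U) (hR : R ≠ 0)
    (hRU : sphere c |R| ⊆ U) :
    HasDerivAt (circleAverage f c) (R⁻¹ • circleAverage (radialDeriv c f) c R) R := by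
  obtain ⟨δ, hδ, hδU⟩ := (isCompact_sphere c |R|).exists_cthickening_subset_open hU hRU
  have hf' : ContinuousOn (fderiv ℝ f) U := hf.continuousOn_fderiv_of_isOpen hU le_rfl
  obtain ⟨K, hK⟩ := (isCompact_sphere c |R|).cthickening.exists_bound_of_continuousOn (hf'.mono hδU)
  have continuous_circle (t) (ht : t ∈ closedBall R δ) :
      Continuous fun θ => f (circleMap c t θ) :=
    hf.continuousOn.comp_continuous (continuous_circleMap c t) fun θ =>
      hδU (circleMap_mem_cthickening_sphere c ht θ)
  have hRδ : R ∈ closedBall R δ := mem_closedBall_self hδ.le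
  have key := (intervalIntegral.hasDerivAt_integral_of_dominated_loc_of_deriv_le
    (F := fun t θ => f (circleMap c t θ)) (a := 0) (b := 2 * π) (μ := volume)
    (F' := fun t θ => fderiv ℝ f (circleMap c t θ) (circleMap 0 1 θ))
    (bound := fun _ => K) (closedBall_mem_nhds R hδ) ?_
    ((continuous_circle R hRδ).intervalIntegrable _ _) ?_ ?_ intervalIntegrable_const ?_).2
  · refine (key.const_smul (2 * π)⁻¹).congr_deriv ?_
    have hunit (θ : ℝ) : circleMap 0 1 θ = R⁻¹ • circleMap 0 R θ := by simp [circleMap, hR]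
    simp only [hunit, map_smul, circleAverage_def, radialDeriv, circleMap_sub_center,
      intervalIntegral.integral_smul]
    exact smul_comm _ _ _
  · filter_upwards [closedBall_mem_nhds R hδ] with t ht
    exact (continuous_circle t ht).aestronglyMeasurable
  · refine Continuous.aestronglyMeasurable (.clm_apply ?_ (continuous_circleMap 0 1))
    exact hf'.comp_continuous (continuous_circleMap c R) fun θ => hRU (circleMap_mem_sphere' c R θ)
  · refine .of_forall fun θ _ t ht => ?_
    simpa using (fderiv ℝ f (circleMap c t θ)).le_of_opNorm_le
      (hK _ (circleMap_mem_cthickening_sphere c ht θ)) (circleMap 0 1 θ)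
  · refine .of_forall fun θ _ t ht => ?_
    have hd := (hf.differentiableOn one_ne_zero).differentiableAt
      (hU.mem_nhds (hδU (circleMap_mem_cthickening_sphere c ht θ)))
    exact hd.hasFDerivAt.comp_hasDerivAt t (hasDerivAt_circleMap_radius c t θ)

lemma circleAverage_angularDeriv [CompleteSpace E] (hU : IsOpen U) (hf : ContDiffOn ℝ 1 f U)
    (hRU : sphere c |R| ⊆ U) : circleAverage (angularDeriv c f) c R = 0 := by
  have hderiv (θ : ℝ) :
      HasDerivAt (fun θ => f (circleMap c R θ)) (angularDeriv c f (circleMap c R θ)) θ := by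
    have hd := (hf.differentiableOn one_ne_zero).differentiableAt
      (hU.mem_nhds (hRU (circleMap_mem_sphere' c R θ)))
    rw [angularDeriv, circleMap_sub_center, mul_comm]
    exact hd.hasFDerivAt.comp_hasDerivAt θ (hasDerivAt_circleMap c R θ)
  have hint : CircleIntegrable (angularDeriv c f) c R :=
    ((contDiffOn_angularDeriv (n := 0) hU (by simpa)).continuousOn.mono hRU).circleIntegrable'
  rw [circleAverage, intervalIntegral.integral_eq_sub_of_hasDerivAt (fun θ _ => hderiv θ) hint]
  simp [circleMap]

lemma laplacian_eq_fderiv_fderiv (f : ℂ → E) (z : ℂ) :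
    Δ f z = fderiv ℝ (fderiv ℝ f) z 1 1 + fderiv ℝ (fderiv ℝ f) z I I := by
  simp [InnerProductSpace.laplacian_eq_iteratedFDeriv_complexPlane, iteratedFDeriv_two_apply]

lemma continuousOn_laplacian (hU : IsOpen U) (hf : ContDiffOn ℝ 2 f U) :
    ContinuousOn (Δ f) U := by
  have hf' : ContinuousOn (fderiv ℝ (fderiv ℝ f)) U :=
    (hf.fderiv_of_isOpen hU (m := 1) (by norm_num)).continuousOn_fderiv_of_isOpen hU le_rfl
  rw [funext (laplacian_eq_fderiv_fderiv f)]
  fun_prop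

lemma fderiv_fderiv_add_fderiv_fderiv_I_mul (f : ℂ → E) (z w : ℂ) :
    fderiv ℝ (fderiv ℝ f) z w w + fderiv ℝ (fderiv ℝ f) z (I * w) (I * w) =
      ‖w‖ ^ 2 • Δ f z := by
  have hw : w = w.re • (1 : ℂ) + w.im • I := by simp [re_add_im]
  have hIw : I * w = (-w.im) • (1 : ℂ) + w.re • I := by
    apply Complex.ext <;> simp
  rw [laplacian_eq_fderiv_fderiv, hIw, ← normSq_eq_norm_sq, normSq_apply]
  set B := fderiv ℝ (fderiv ℝ f) z
  have : B w w = B (w.re • (1 : ℂ) + w.im • I) (w.re • (1 : ℂ) + w.im • I) := by rw [← hw]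
  rw [this]
  simp only [map_add, map_smul, add_apply, smul_apply]
  module

lemma radialDeriv_radialDeriv_add_angularDeriv_angularDeriv (c : ℂ) (hf : ContDiffAt ℝ 2 f z) :
    radialDeriv c (radialDeriv c f) z + angularDeriv c (angularDeriv c f) z =
      ‖z - c‖ ^ 2 • Δ f z := by
  have hf' : DifferentiableAt ℝ (fderiv ℝ f) z :=
    (hf.fderiv_right (m := 1) (by norm_num)).differentiableAt one_ne_zero
  have hsub : HasFDerivAt (fun w : ℂ => w - c) (.id ℝ ℂ) z := (hasFDerivAt_id z).sub_const c
  have hradial := hf'.hasFDerivAt.clm_apply hsub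
  have hangular := hf'.hasFDerivAt.clm_apply (hsub.const_mul I)
  rw [← fderiv_fderiv_add_fderiv_fderiv_I_mul, radialDeriv, angularDeriv]
  unfold radialDeriv angularDeriv
  rw [hradial.fderiv, hangular.fderiv]
  simp only [ContinuousLinearMap.comp_id, map_sub, add_apply, sub_apply,
    ContinuousLinearMap.flip_apply, ContinuousLinearMap.comp_apply, smul_apply,
    ContinuousLinearMap.id_apply, smul_eq_mul, ← mul_assoc, I_mul_I, neg_mul, one_mul, neg_sub]
  abel

/-- Since `(r ∂_r)² = r² Δ - ∂_θ²` and the angular term averages to zero, only `Δ` remains. -/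
lemma hasDerivAt_circleAverage_radialDeriv [CompleteSpace E] (hU : IsOpen U)
    (hf : ContDiffOn ℝ 2 f U) (hR : R ≠ 0) (hRU : sphere c |R| ⊆ U) :
    HasDerivAt (circleAverage (radialDeriv c f) c) (R • circleAverage (Δ f) c R) R := by
  have hf' : ContDiffOn ℝ (1 + 1) f U := by rwa [one_add_one_eq_two]
  have hradial : ContDiffOn ℝ 1 (radialDeriv c f) U := contDiffOn_radialDeriv hU hf'
  have hangular : ContDiffOn ℝ 1 (angularDeriv c f) U := contDiffOn_angularDeriv hU hf'
  have hΔ : CircleIntegrable (fun z => R ^ 2 • Δ f z) c R :=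
    (((continuousOn_laplacian hU hf).mono hRU).const_smul _).circleIntegrable'
  have hangular' : CircleIntegrable (angularDeriv c (angularDeriv c f)) c R :=
    ((contDiffOn_angularDeriv (n := 0) hU (by simpa)).continuousOn.mono hRU).circleIntegrable'
  have hpolar : EqOn (radialDeriv c (radialDeriv c f))
      ((fun z => R ^ 2 • Δ f z) - angularDeriv c (angularDeriv c f)) (sphere c |R|) := by
    intro z hz
    have := radialDeriv_radialDeriv_add_angularDeriv_angularDeriv c
      (hf.contDiffAt (hU.mem_nhds (hRU hz)))
    rw [mem_sphere_iff_norm.1 hz, sq_abs] at this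
    exact eq_sub_of_add_eq this
  refine (hasDerivAt_circleAverage hU hradial hR hRU).congr_deriv ?_
  rw [circleAverage_congr_sphere hpolar, circleAverage_sub hΔ hangular',
    circleAverage_angularDeriv hU hangular hRU, sub_zero, circleAverage_fun_smul, smul_smul]
  congr 1
  field

lemma integral_eq_integral_circleMap (g : ℂ → E) (c : ℂ) :
    ∫ ζ, g ζ = ∫ p in Ioi (0 : ℝ) ×ˢ Ioo (-π) π, p.1 • g (circleMap c p.1 p.2) := by
  rw [← integral_add_left_eq_self g c, ← Complex.integral_comp_polarCoord_symm, polarCoord_target]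
  simp [circleMap, exp_mul_I]

lemma circleAverage_eq_integral_Ioo_neg_pi_pi (f : ℂ → E) (c : ℂ) (R : ℝ) :
    circleAverage f c R = (2 * π)⁻¹ • ∫ θ in Ioo (-π) π, f (circleMap c R θ) := by
  have hper : (fun θ => f (circleMap c R θ)).Periodic (2 * π) := fun θ => by
    simp [periodic_circleMap c R θ]
  have hshift := hper.intervalIntegral_add_eq 0 (-π)
  rw [zero_add, show -π + 2 * π = π by ring] at hshift
  rw [circleAverage, hshift, intervalIntegral.integral_of_le (by linarith [pi_pos]),
    integral_Ioc_eq_integral_Ioo]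

lemma setIntegral_annulus_eq_setIntegral_circleMap (f : ℂ → E) (c : ℂ) (ρ R : ℝ) :
    ∫ ζ in ball c R \ ball c ρ, f ζ =
      ∫ p in (Ioi 0 ∩ Ico ρ R) ×ˢ Ioo (-π) π, p.1 • f (circleMap c p.1 p.2) := by
  have hindicator : EqOn
      (fun p : ℝ × ℝ => p.1 • (ball c R \ ball c ρ).indicator f (circleMap c p.1 p.2))
      ((Ico ρ R ×ˢ univ).indicator fun p => p.1 • f (circleMap c p.1 p.2))
      (Ioi 0 ×ˢ Ioo (-π) π) := by
    rintro ⟨t, θ⟩ ⟨ht : 0 < t, -⟩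
    have hmem : circleMap c t θ ∈ ball c R \ ball c ρ ↔ t ∈ Ico ρ R := by
      simp [dist_eq_norm, abs_of_pos ht, and_comm]
    by_cases h : t ∈ Ico ρ R
    · simp [h, hmem.2 h]
    · simp [h, mt hmem.1 h]
  rw [← integral_indicator (measurableSet_ball.diff measurableSet_ball),
    integral_eq_integral_circleMap _ c,
    setIntegral_congr_fun (measurableSet_Ioi.prod measurableSet_Ioo) hindicator,
    setIntegral_indicator (measurableSet_Ico.prod .univ), prod_inter_prod, inter_univ]

lemma setIntegral_annulus_eq_integral_circleAverage (hρ : 0 ≤ ρ) (hρR : ρ ≤ R)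
    (hf : ContinuousOn f (closedBall c R \ ball c ρ)) :
    ∫ ζ in ball c R \ ball c ρ, f ζ = (2 * π) • ∫ t in ρ..R, t • circleAverage f c t := by
  have hcont : ContinuousOn (fun p : ℝ × ℝ => p.1 • f (circleMap c p.1 p.2))
      (Icc ρ R ×ˢ Icc (-π) π) := by
    refine continuousOn_fst.smul (hf.comp (by fun_prop) fun p hp => ?_)
    simpa [dist_eq_norm, abs_of_nonneg (hρ.trans hp.1.1)] using hp.1.symm
  have hint : IntegrableOn (fun p : ℝ × ℝ => p.1 • f (circleMap c p.1 p.2))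
      ((Ioi 0 ∩ Ico ρ R) ×ˢ Ioo (-π) π) :=
    (hcont.integrableOn_compact (isCompact_Icc.prod isCompact_Icc)).mono_set
      (prod_mono (inter_subset_right.trans Ico_subset_Icc_self) Ioo_subset_Icc_self)
  have hradii : (Ioi 0 ∩ Ico ρ R : Set ℝ) =ᵐ[volume] Ioc ρ R := by
    refine .trans (.symm ?_) Ioo_ae_eq_Ioc
    rw [← inter_eq_right.2 (Ioo_subset_Ioi_self.trans (Ioi_subset_Ioi hρ))]
    exact .inter (.refl _ _) Ioo_ae_eq_Ico
  calc ∫ ζ in ball c R \ ball c ρ, f ζ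
      = ∫ t in Ioc ρ R, t • ∫ θ in Ioo (-π) π, f (circleMap c t θ) := by
        rw [setIntegral_annulus_eq_setIntegral_circleMap, Measure.volume_eq_prod,
          setIntegral_prod _ hint, setIntegral_congr_set hradii]
        simp only [integral_smul]
    _ = (2 * π) • ∫ t in ρ..R, t • circleAverage f c t := by
        rw [intervalIntegral.integral_of_le hρR, ← integral_smul]
        simp only [circleAverage_eq_integral_Ioo_neg_pi_pi, smul_comm (2 * π),
          inv_smul_smul₀ two_pi_pos.ne']

lemma continuousOn_log_div_norm_sub_smul_laplacian (hU : IsOpen U) (hf : ContDiffOn ℝ 2 f U)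
    (hR : R ≠ 0) : ContinuousOn (fun ζ => Real.log (R / ‖ζ - c‖) • Δ f ζ) (U \ {c}) := by
  have hne : ∀ ζ ∈ U \ {c}, ‖ζ - c‖ ≠ 0 := fun ζ hζ => norm_ne_zero_iff.2 (sub_ne_zero.2 hζ.2)
  have hlog : ContinuousOn (fun ζ => Real.log (R / ‖ζ - c‖)) (U \ {c}) :=
    (continuousOn_const.div (by fun_prop) hne).log fun ζ hζ => div_ne_zero hR (hne ζ hζ)
  exact hlog.smul ((continuousOn_laplacian hU hf).mono sdiff_subset)

lemma closedBall_sdiff_ball_subset_sdiff_singleton (hρ : 0 < ρ)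
    (hRU : closedBall c R \ ball c ρ ⊆ U) : closedBall c R \ ball c ρ ⊆ U \ {c} :=
  subset_sdiff_singleton hRU fun hc => hc.2 (mem_ball_self hρ)

lemma hasDerivAt_log_div_smul_circleAverage_add [CompleteSpace E] {t : ℝ} (hU : IsOpen U)
    (hf : ContDiffOn ℝ 2 f U) (hR : R ≠ 0) (ht : 0 < t) (htU : sphere c t ⊆ U) :
    HasDerivAt
      (fun t => Real.log (R / t) • circleAverage (radialDeriv c f) c t + circleAverage f c t)
      (t • circleAverage (fun ζ => Real.log (R / ‖ζ - c‖) • Δ f ζ) c t) t := by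
  rw [← abs_of_pos ht] at htU
  have hlog : HasDerivAt (fun t => Real.log (R / t)) (-t⁻¹) t := by
    refine ((Real.hasDerivAt_log ht.ne').const_sub (Real.log R)).congr_of_eventuallyEq ?_
    filter_upwards [lt_mem_nhds ht] with s hs using Real.log_div hR hs.ne'
  have hweight : circleAverage (fun ζ => Real.log (R / ‖ζ - c‖) • Δ f ζ) c t =
      Real.log (R / t) • circleAverage (Δ f) c t := by
    rw [← circleAverage_fun_smul]
    refine circleAverage_congr_sphere fun ζ hζ => ?_
    simp only [mem_sphere_iff_norm.1 hζ, abs_of_pos ht]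
  refine ((hlog.smul (hasDerivAt_circleAverage_radialDeriv hU hf ht.ne' htU)).add
    (hasDerivAt_circleAverage hU (hf.of_le one_le_two) ht.ne' htU)).congr_deriv ?_
  rw [hweight]
  module

/-- Jensen's formula on an annulus. -/
theorem setIntegral_annulus_log_smul_laplacian [CompleteSpace E] (hU : IsOpen U)
    (hf : ContDiffOn ℝ 2 f U) (hρ : 0 < ρ) (hρR : ρ ≤ R) (hRU : closedBall c R \ ball c ρ ⊆ U) :
    ∫ ζ in ball c R \ ball c ρ, Real.log (R / ‖ζ - c‖) • Δ f ζ =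
      (2 * π) • (circleAverage f c R - circleAverage f c ρ -
        Real.log (R / ρ) • circleAverage (radialDeriv c f) c ρ) := by
  have hR : 0 < R := hρ.trans_le hρR
  have hcont := (continuousOn_log_div_norm_sub_smul_laplacian hU hf hR.ne').mono
    (closedBall_sdiff_ball_subset_sdiff_singleton hρ hRU)
  have hint : IntervalIntegrable
      (fun t => t • circleAverage (fun ζ => Real.log (R / ‖ζ - c‖) • Δ f ζ) c t) volume ρ R := by
    refine ContinuousOn.intervalIntegrable_of_Icc hρR (continuousOn_id.smul ?_)
    refine ContinuousOn.circleAverage (hcont.mono fun ζ hζ => ?_) fun t ht => hρ.le.trans ht.1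
    simpa [dist_eq_norm] using hζ.symm
  have hderiv (t) (ht : t ∈ uIcc ρ R) := by
    rw [uIcc_of_le hρR] at ht
    refine hasDerivAt_log_div_smul_circleAverage_add (c := c) hU hf hR.ne' (hρ.trans_le ht.1)
      (Subset.trans (fun ζ hζ => ?_) hRU)
    exact ⟨hζ.le.trans ht.2, by simpa [mem_sphere.1 hζ] using ht.1⟩
  rw [setIntegral_annulus_eq_integral_circleAverage hρ.le hρR hcont,
    intervalIntegral.integral_eq_sub_of_hasDerivAt hderiv hint]
  simp [hR.ne', sub_add_eq_sub_sub_swap]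

end CircleAverage

section Subharmonic

variable {f : ℂ → ℝ} {c : ℂ} {ρ R : ℝ} {U : Set ℂ}

lemma monotoneOn_circleAverage_radialDeriv (hU : IsOpen U) (hf : ContDiffOn ℝ 2 f U)
    (hRU : closedBall c R ⊆ U) (hΔ : ∀ z ∈ ball c R, 0 ≤ Δ f z) :
    MonotoneOn (circleAverage (radialDeriv c f) c) (Icc 0 R) := by
  have hsphere {t : ℝ} (ht : t ∈ Ioo 0 R) : sphere c |t| ⊆ ball c R := by
    rw [abs_of_pos ht.1]
    exact sphere_subset_ball ht.2
  have hderiv {t : ℝ} (ht : t ∈ Ioo 0 R) :=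
    hasDerivAt_circleAverage_radialDeriv hU hf ht.1.ne'
      ((hsphere ht).trans (ball_subset_closedBall.trans hRU))
  have hcont : ContinuousOn (radialDeriv c f) U :=
    (contDiffOn_radialDeriv (n := 1) hU (by rwa [one_add_one_eq_two])).continuousOn
  refine monotoneOn_of_deriv_nonneg (convex_Icc 0 R) ?_ ?_ ?_
  · refine ContinuousOn.circleAverage (hcont.mono fun ζ hζ => hRU ?_) fun t ht => ht.1
    simpa [dist_eq_norm] using hζ.2
  all_goals
    rw [interior_Icc]
    intro t ht
  · exact (hderiv ht).differentiableAt.differentiableWithinAt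
  · rw [(hderiv ht).deriv]
    exact mul_nonneg ht.1.le (circleAverage_nonneg_of_nonneg fun ζ hζ => hΔ ζ (hsphere ht hζ))

lemma circleAverage_radialDeriv_nonneg (hU : IsOpen U) (hf : ContDiffOn ℝ 2 f U)
    (hRU : closedBall c R ⊆ U) (hΔ : ∀ z ∈ ball c R, 0 ≤ Δ f z) (hρ : ρ ∈ Icc 0 R) :
    0 ≤ circleAverage (radialDeriv c f) c ρ :=
  calc 0 = circleAverage (radialDeriv c f) c 0 := by simp [radialDeriv]
    _ ≤ circleAverage (radialDeriv c f) c ρ :=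
      monotoneOn_circleAverage_radialDeriv hU hf hRU hΔ (left_mem_Icc.2 (hρ.1.trans hρ.2)) hρ hρ.1

lemma monotoneOn_circleAverage (hU : IsOpen U) (hf : ContDiffOn ℝ 2 f U)
    (hRU : closedBall c R ⊆ U) (hΔ : ∀ z ∈ ball c R, 0 ≤ Δ f z) :
    MonotoneOn (circleAverage f c) (Icc 0 R) := by
  have hderiv {t : ℝ} (ht : t ∈ Ioo 0 R) := by
    refine hasDerivAt_circleAverage (c := c) hU (hf.of_le one_le_two) ht.1.ne' ?_
    rw [abs_of_pos ht.1]
    exact sphere_subset_closedBall.trans ((closedBall_subset_closedBall ht.2.le).trans hRU)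
  refine monotoneOn_of_deriv_nonneg (convex_Icc 0 R) ?_ ?_ ?_
  · refine ContinuousOn.circleAverage (hf.continuousOn.mono fun ζ hζ => hRU ?_) fun t ht => ht.1
    simpa [dist_eq_norm] using hζ.2
  all_goals
    rw [interior_Icc]
    intro t ht
  · exact (hderiv ht).differentiableAt.differentiableWithinAt
  · rw [(hderiv ht).deriv]
    exact mul_nonneg (inv_nonneg.2 ht.1.le)
      (circleAverage_radialDeriv_nonneg hU hf hRU hΔ (Ioo_subset_Icc_self ht))

theorem setIntegral_annulus_log_smul_laplacian_le (hU : IsOpen U) (hf : ContDiffOn ℝ 2 f U)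
    (hρ : 0 < ρ) (hρR : ρ ≤ R) (hRU : closedBall c R ⊆ U) (hΔ : ∀ z ∈ ball c R, 0 ≤ Δ f z) :
    ∫ ζ in ball c R \ ball c ρ, Real.log (R / ‖ζ - c‖) • Δ f ζ ≤
      2 * π * (circleAverage f c R - f c) := by
  have hρ_mem : ρ ∈ Icc 0 R := ⟨hρ.le, hρR⟩
  have hcenter : f c ≤ circleAverage f c ρ := by
    simpa using monotoneOn_circleAverage hU hf hRU hΔ
      (left_mem_Icc.2 (hρ.le.trans hρR)) hρ_mem hρ.le
  have hradial : 0 ≤ Real.log (R / ρ) * circleAverage (radialDeriv c f) c ρ :=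
    mul_nonneg (Real.log_nonneg ((one_le_div hρ).2 hρR))
      (circleAverage_radialDeriv_nonneg hU hf hRU hΔ hρ_mem)
  rw [setIntegral_annulus_log_smul_laplacian hU hf hρ hρR (sdiff_subset.trans hRU),
    smul_eq_mul, smul_eq_mul]
  exact mul_le_mul_of_nonneg_left (by linarith) two_pi_pos.le

end Subharmonic

section GreenKernel

variable {r ρ R : ℝ} {z ζ : ℂ}

/-- The Green kernel of the disk of radius `R` around `0`, up to the factor `1 / (2 * π)`. Since
`Real.log 0 = 0`, it vanishes on the diagonal instead of being `-∞` there. -/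
noncomputable def diskGreenKernel (R : ℝ) (z ζ : ℂ) : ℝ :=
  Real.log (‖(R : ℂ) * z - (R : ℂ) * ζ‖ / ‖(R : ℂ) ^ 2 - z * (starRingEnd ℂ) ζ‖)

lemma norm_sq_sub_mul_conj_sq_sub_norm_mul_sub_mul_sq (R : ℝ) (z ζ : ℂ) :
    ‖(R : ℂ) ^ 2 - z * (starRingEnd ℂ) ζ‖ ^ 2 - ‖(R : ℂ) * z - (R : ℂ) * ζ‖ ^ 2 =
      (R ^ 2 - ‖z‖ ^ 2) * (R ^ 2 - ‖ζ‖ ^ 2) := by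
  simp only [← normSq_eq_norm_sq, normSq_apply]
  simp only [pow_two, sub_re, sub_im, mul_re, mul_im, ofReal_re, ofReal_im, conj_re, conj_im]
  ring

lemma abs_log_div_le {a b : ℝ} (ha : 0 < a) (hab : a ≤ b) :
    |Real.log (a / b)| ≤ (b ^ 2 - a ^ 2) / (2 * a ^ 2) := by
  have hb : 0 < b := ha.trans_le hab
  rw [abs_of_nonpos (Real.log_nonpos (by positivity) ((div_le_one hb).2 hab)), ← Real.log_inv,
    inv_div]
  have hsq : 2 * Real.log (b / a) ≤ (b / a) ^ 2 - 1 := by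
    simpa using Real.log_le_sub_one_of_pos (pow_pos (div_pos hb ha) 2)
  have : (b ^ 2 - a ^ 2) / (2 * a ^ 2) = ((b / a) ^ 2 - 1) / 2 := by field
  linarith

lemma sub_le_mul_log_div {s : ℝ} (hR : 0 < R) (hs : 0 < s) : R - s ≤ R * Real.log (R / s) :=
  calc R - s = R * (1 - (R / s)⁻¹) := by field
    _ ≤ R * Real.log (R / s) := by
      gcongr
      exact Real.one_sub_inv_le_log_of_pos (div_pos hR hs)

lemma abs_diskGreenKernel_le (hz : ‖z‖ ≤ R) (hζ : ‖ζ‖ ≤ R) (hR : 0 < R) (hzζ : z ≠ ζ) :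
    |diskGreenKernel R z ζ| ≤ R / ‖z - ζ‖ ^ 2 * (R - ‖ζ‖) := by
  have hid := norm_sq_sub_mul_conj_sq_sub_norm_mul_sub_mul_sq R z ζ
  have hnum : ‖(R : ℂ) * z - (R : ℂ) * ζ‖ = R * ‖z - ζ‖ := by
    rw [← mul_sub, norm_mul, norm_real, norm_of_nonneg hR.le]
  have hzζ' : 0 < ‖z - ζ‖ := norm_sub_pos_iff.2 hzζ
  have hz' : 0 ≤ R ^ 2 - ‖z‖ ^ 2 := sub_nonneg.2 (by gcongr)
  have hζ' : 0 ≤ R ^ 2 - ‖ζ‖ ^ 2 := sub_nonneg.2 (by gcongr)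
  have hle : ‖(R : ℂ) * z - (R : ℂ) * ζ‖ ≤ ‖(R : ℂ) ^ 2 - z * (starRingEnd ℂ) ζ‖ :=
    le_of_sq_le_sq (by linarith [mul_nonneg hz' hζ']) (norm_nonneg _)
  calc |diskGreenKernel R z ζ|
      ≤ (R ^ 2 - ‖z‖ ^ 2) * (R ^ 2 - ‖ζ‖ ^ 2) / (2 * (R * ‖z - ζ‖) ^ 2) := by
        rw [← hid, ← hnum]
        exact abs_log_div_le (by rw [hnum]; positivity) hle
    _ ≤ R ^ 2 * (2 * R * (R - ‖ζ‖)) / (2 * (R * ‖z - ζ‖) ^ 2) := by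
        gcongr
        · linarith [sq_nonneg ‖z‖]
        · nlinarith
    _ = R / ‖z - ζ‖ ^ 2 * (R - ‖ζ‖) := by field

lemma abs_diskGreenKernel_le_mul_log_div (hz : ‖z‖ ≤ r) (hrρ : r < ρ) (hρ : ρ ≤ ‖ζ‖)
    (hζ : ‖ζ‖ ≤ R) :
    |diskGreenKernel R z ζ| ≤ R ^ 2 / (ρ - r) ^ 2 * Real.log (R / ‖ζ‖) := by
  have hζ0 : 0 < ‖ζ‖ := by linarith [norm_nonneg z]
  have hR : 0 < R := hζ0.trans_le hζ
  have hdist : ρ - r ≤ ‖z - ζ‖ := by linarith [norm_sub_norm_le ζ z, norm_sub_rev ζ z]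
  have hzζ : z ≠ ζ := norm_sub_pos_iff.1 (by linarith)
  calc |diskGreenKernel R z ζ|
      ≤ R / ‖z - ζ‖ ^ 2 * (R - ‖ζ‖) := abs_diskGreenKernel_le (by linarith) hζ hR hzζ
    _ ≤ R / (ρ - r) ^ 2 * (R * Real.log (R / ‖ζ‖)) := by
        have : 0 < ρ - r := sub_pos.2 hrρ
        gcongr
        exact sub_le_mul_log_div hR hζ0
    _ = R ^ 2 / (ρ - r) ^ 2 * Real.log (R / ‖ζ‖) := by ring

end GreenKernel

lemma laplacian_eq_innerProductSpace_laplacian {f : ℂ → ℝ} {z : ℂ} (hf : ContDiffAt ℝ 2 f z) :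
    laplacian f z = Δ f z := by
  have hf' : DifferentiableAt ℝ (fderiv ℝ f) z :=
    (hf.fderiv_right (m := 1) (by norm_num)).differentiableAt one_ne_zero
  have hdir (v : ℂ) : fderiv ℝ (fun w => fderiv ℝ f w v) z v = fderiv ℝ (fderiv ℝ f) z v v := by
    simp [fderiv_clm_apply hf' (differentiableAt_const v)]
  rw [laplacian, hdir, hdir, laplacian_eq_fderiv_fderiv]

theorem abs_setIntegral_diskGreenKernel_mul_laplacian_le {r ρ R : ℝ} {ψ : ℂ → ℝ} {U : Set ℂ} {z : ℂ}
    (hU : IsOpen U) (hRU : closedBall 0 R ⊆ U) (hψ : ContDiffOn ℝ 2 ψ U)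
    (hΔ : ∀ ζ ∈ ball 0 R, 0 ≤ Δ ψ ζ) (hz : ‖z‖ ≤ r) (hrρ : r < ρ) (hρR : ρ ≤ R) :
    |∫ ζ in ball 0 R \ ball 0 ρ, diskGreenKernel R z ζ * Δ ψ ζ| ≤
      R ^ 2 / (ρ - r) ^ 2 * (2 * π * (circleAverage ψ 0 R - ψ 0)) := by
  have hρ : 0 < ρ := (norm_nonneg z).trans_lt (hz.trans_lt hrρ)
  have hcont := (continuousOn_log_div_norm_sub_smul_laplacian hU hψ (hρ.trans_le hρR).ne').mono
    (closedBall_sdiff_ball_subset_sdiff_singleton hρ (sdiff_subset.trans hRU))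
  have hint : IntegrableOn (fun ζ => Real.log (R / ‖ζ - 0‖) • Δ ψ ζ) (ball 0 R \ ball 0 ρ) :=
    (hcont.integrableOn_compact ((isCompact_closedBall 0 R).diff isOpen_ball)).mono_set
      (sdiff_subset_sdiff_left ball_subset_closedBall)
  have hbound : ∀ ζ ∈ ball 0 R \ ball 0 ρ, ‖diskGreenKernel R z ζ * Δ ψ ζ‖ ≤
      R ^ 2 / (ρ - r) ^ 2 * (Real.log (R / ‖ζ - 0‖) • Δ ψ ζ) := by
    rintro ζ ⟨hζR, hζρ⟩
    rw [norm_mul, norm_of_nonneg (hΔ ζ hζR), smul_eq_mul, ← mul_assoc, sub_zero]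
    gcongr
    · exact hΔ ζ hζR
    · exact abs_diskGreenKernel_le_mul_log_div hz hrρ (by simpa using hζρ)
        (mem_ball_zero_iff.1 hζR).le
  calc |∫ ζ in ball 0 R \ ball 0 ρ, diskGreenKernel R z ζ * Δ ψ ζ|
      ≤ ∫ ζ in ball 0 R \ ball 0 ρ,
          R ^ 2 / (ρ - r) ^ 2 * (Real.log (R / ‖ζ - 0‖) • Δ ψ ζ) :=
        norm_integral_le_of_norm_le (hint.const_mul _)
          (ae_restrict_of_forall_mem (measurableSet_ball.diff measurableSet_ball) hbound)
    _ ≤ R ^ 2 / (ρ - r) ^ 2 * (2 * π * (circleAverage ψ 0 R - ψ 0)) := by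
        rw [integral_const_mul]
        gcongr
        exact setIntegral_annulus_log_smul_laplacian_le hU hψ hρ hρR hRU hΔ

theorem stmt_7_general {r ρ R A : ℝ} {ψ : ℂ → ℝ} {U : Set ℂ} {z : ℂ} (hU : IsOpen U)
    (hRU : closedBall 0 R ⊆ U) (hψ : ContDiffOn ℝ 2 ψ U)
    (hΔ : ∀ ζ ∈ ball 0 R, 0 ≤ laplacian ψ ζ) (hA : ∀ ζ ∈ sphere 0 R, ψ ζ ≤ A)
    (hz : ‖z‖ ≤ r) (hrρ : r < ρ) (hρR : ρ ≤ R) :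
    |(1 / (2 * π)) *
        ∫ ζ in ball (0 : ℂ) R \ ball (0 : ℂ) ρ,
          Real.log (‖(R : ℂ) * z - (R : ℂ) * ζ‖ /
              ‖(R : ℂ) ^ 2 - z * (starRingEnd ℂ) ζ‖) * laplacian ψ ζ| ≤
      R ^ 2 / (ρ - r) ^ 2 * (A - ψ 0) := by
  have hR : |R| = R := abs_of_nonneg (by linarith [norm_nonneg z])
  have hlaplacian : ∀ ζ ∈ ball 0 R, laplacian ψ ζ = Δ ψ ζ := fun ζ hζ =>
    laplacian_eq_innerProductSpace_laplacian
      (hψ.contDiffAt (hU.mem_nhds (hRU (ball_subset_closedBall hζ))))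
  have hboundary : circleAverage ψ 0 R ≤ A :=
    circleAverage_mono_on_of_le_circle ((hψ.continuousOn.mono
      (by simpa [hR] using sphere_subset_closedBall.trans hRU)).circleIntegrable')
      (by simpa [hR] using hA)
  have hint := abs_setIntegral_diskGreenKernel_mul_laplacian_le hU hRU hψ
    (fun ζ hζ => hlaplacian ζ hζ ▸ hΔ ζ hζ) hz hrρ hρR
  rw [setIntegral_congr_fun (measurableSet_ball.diff measurableSet_ball)
    fun ζ hζ => by rw [hlaplacian ζ hζ.1], abs_mul, abs_of_nonneg (by positivity)]
  calc 1 / (2 * π) *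
        |∫ ζ in ball 0 R \ ball 0 ρ, diskGreenKernel R z ζ * Δ ψ ζ|
      ≤ 1 / (2 * π) *
          (R ^ 2 / (ρ - r) ^ 2 * (2 * π * (circleAverage ψ 0 R - ψ 0))) := by gcongr
    _ = R ^ 2 / (ρ - r) ^ 2 * (circleAverage ψ 0 R - ψ 0) := by field
    _ ≤ R ^ 2 / (ρ - r) ^ 2 * (A - ψ 0) := by gcongr

end

/-- Let `0 < r < ρ < R`. There is a constant `C > 0`, depending only on `r, ρ, R`, such that
for every smooth subharmonic `ψ̃` on an open neighborhood of the closed disk of radius `R`, with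
`ψ̃ ≤ 1` on the closed disk and `ψ̃(0) ≥ 0`, and every `z` with `|z| < r`,
`|(1/2π) ∫_{B_R(0) \ B_ρ(0)} log(|Rz − Rζ|/|R² − z ζ̄|) Δψ̃(ζ) dA(ζ)| ≤ C`. -/
theorem stmt_7 (r ρ R : ℝ) (hr : 0 < r) (hrρ : r < ρ) (hρR : ρ < R) :
    ∃ C : ℝ, 0 < C ∧ ∀ ψ : ℂ → ℝ, ∀ U : Set ℂ, IsOpen U →
      Metric.closedBall (0 : ℂ) R ⊆ U → ContDiffOn ℝ (⊤ : ℕ∞) ψ U →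
      (∀ z ∈ U, 0 ≤ laplacian ψ z) →
      (∀ z ∈ Metric.closedBall (0 : ℂ) R, ψ z ≤ 1) → 0 ≤ ψ 0 →
      ∀ z : ℂ, ‖z‖ < r →
        |(1 / (2 * Real.pi)) *
            ∫ ζ in Metric.ball (0 : ℂ) R \ Metric.ball (0 : ℂ) ρ,
              Real.log (‖(R : ℂ) * z - (R : ℂ) * ζ‖ /
                  ‖(R : ℂ) ^ 2 - z * (starRingEnd ℂ) ζ‖) * laplacian ψ ζ|
          ≤ C := by
  refine ⟨R ^ 2 / (ρ - r) ^ 2, div_pos (pow_pos (by linarith) 2) (pow_pos (by linarith) 2), ?_⟩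
  intro ψ U hU hRU hψ hΔ hψ1 hψ0 z hz
  exact (stmt_7_general hU hRU (contDiffOn_infty.1 hψ 2) (fun ζ hζ =>
    hΔ ζ (hRU (Metric.ball_subset_closedBall hζ))) (fun ζ hζ =>
    hψ1 ζ (Metric.sphere_subset_closedBall hζ)) hz.le hrρ hρR.le).trans
    (mul_le_of_le_one_right (by positivity) (by linarith))
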